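/- Fix an integer n ≥ 1 and set c = 1 + 1/log T. If T is admissible (|T − γ| ≥ δ/log T for every ordinate γ of a non-trivial zero of ζ, for some fixed δ > 0), then ∫_{1−c}^{c} |(ζ'/ζ)(σ + iT)| · |ζ^{(n)}(σ + iT)| dσ ≪ T^{1/2} log^{n+2} T, with implied constant depending only on n and δ. -/

import Mathlib

open Complex

/-- A non-trivial zero of the Riemann zeta function. -/
def IsNontrivialZero (ρ : ℂ) : Prop :=
  riemannZeta ρ = 0 ∧ 0 < ρ.re ∧ ρ.re < 1

/-- `T` is admissible: `|T - γ| ≥ δ / log T` for every ordinate `γ` of a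
non-trivial zero of `ζ`. -/
def AdmissibleHeight (δ T : ℝ) : Prop :=
  ∀ ρ : ℂ, IsNontrivialZero ρ → δ / Real.log T ≤ |T - ρ.im|

theorem landau_base (f : ℂ → ℂ) (B : ℝ) (z0 : ℂ)
    (hf : DifferentiableOn ℂ f (Metric.ball 0 3))
    (hne : ∀ z ∈ Metric.closedBall (0:ℂ) (23/10), f z ≠ 0)
    (hB : 1 ≤ B) (hbd : ∀ z ∈ Metric.closedBall (0:ℂ) (5/2), ‖f z‖ ≤ B * ‖f 0‖)
    (hz0 : ‖z0‖ ≤ 21/10) :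
    ‖deriv f z0 / f z0‖ ≤ 440 * (Real.log B + 1) := by
  have hM : 0 < Real.log B + 1 := by have := Real.log_nonneg hB; linarith
  have hsub : Metric.ball (0:ℂ) (23/10) ⊆ Metric.ball 0 3 := Metric.ball_subset_ball (by norm_num)
  have hne' : ∀ z ∈ Metric.ball (0:ℂ) (23/10), f z ≠ 0 := fun z hz =>
    hne z (Metric.ball_subset_closedBall hz)
  have hfd : ∀ z ∈ Metric.ball (0:ℂ) (23/10), DifferentiableAt ℂ f z := fun z hz =>
    hf.differentiableAt (Metric.isOpen_ball.mem_nhds (hsub hz))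
  have hd : DifferentiableOn ℂ (fun z => deriv f z / f z) (Metric.ball 0 (23/10)) := by
    apply DifferentiableOn.div
    · exact (hf.deriv Metric.isOpen_ball).mono hsub
    · exact hf.mono hsub
    · exact hne'
  obtain ⟨h0, hh0⟩ := hd.isExactOn_ball
  let h : ℂ → ℂ := fun z => h0 z - h0 0
  have hh : ∀ z ∈ Metric.ball (0:ℂ) (23/10), HasDerivAt h (deriv f z / f z) z := fun z hz =>
    (hh0 z hz).sub_const _
  have h00 : h 0 = 0 := by simp [h]
  have hconst : ∀ z ∈ Metric.ball (0:ℂ) (23/10), f z * exp (-h z) = f 0 := by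
    intro z hz
    have hder : ∀ w ∈ Metric.ball (0:ℂ) (23/10),
        HasDerivAt (fun z => f z * exp (-h z)) 0 w := by
      intro w hw
      have := (hfd w hw).hasDerivAt.mul ((hh w hw).neg.cexp)
      refine this.congr_deriv ?_
      have hw0 := hne' w hw
      have e : f w * (cexp (-h w) * -(deriv f w / f w)) = - (deriv f w * cexp (-h w)) := by
        field_simp
      change deriv f w * cexp (-h w) + f w * (cexp (-h w) * -(deriv f w / f w)) = 0
      rw [e]; ring
    have := IsOpen.is_const_of_deriv_eq_zero (𝕜 := ℂ) Metric.isOpen_ball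
      (convex_ball (0:ℂ) (23/10)).isPreconnected
      (fun w hw => (hder w hw).differentiableAt.differentiableWithinAt)
      (fun w hw => (hder w hw).deriv) hz (Metric.mem_ball_self (by norm_num))
    simp only [h00] at this
    simpa using this
  have hre : Set.MapsTo h (Metric.ball 0 (23/10)) {z | z.re ≤ Real.log B + 1} := by
    intro z hz
    have h1 := hconst z hz
    have hf0 : f 0 ≠ 0 := hne' 0 (Metric.mem_ball_self (by norm_num))
    have h2 : f z = f 0 * exp (h z) := by
      rw [← h1, mul_assoc, ← exp_add]; simp
    have h3 := hbd z (Metric.ball_subset_closedBall (Metric.ball_subset_ball (by norm_num) hz))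
    rw [h2, norm_mul, norm_exp, mul_comm] at h3
    have h4 : Real.exp (h z).re ≤ B := le_of_mul_le_mul_right h3 (norm_pos_iff.2 hf0)
    have : (h z).re ≤ Real.log B := (Real.le_log_iff_exp_le (by linarith)).2 h4
    simp only [Set.mem_ofPred_eq]
    linarith
  have hhd : DifferentiableOn ℂ h (Metric.ball 0 (23/10)) := fun z hz =>
    (hh z hz).differentiableAt.differentiableWithinAt
  have hhb : ∀ z : ℂ, ‖z‖ ≤ 22/10 → ‖h z‖ ≤ 44 * (Real.log B + 1) := by
    intro z hz
    have := borelCaratheodory_zero hM hhd hre (by norm_num)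
      (z := z) (by simp; linarith) h00
    refine this.trans ?_
    rw [div_le_iff₀ (by linarith)]
    nlinarith
  have hz0b : z0 ∈ Metric.ball (0:ℂ) (23/10) := by simp; linarith
  rw [← (hh z0 hz0b).deriv]
  have hsb : Metric.closedBall z0 (1/10) ⊆ Metric.ball (0:ℂ) (23/10) := by
    intro w hw
    rw [mem_closedBall_iff_norm] at hw
    rw [mem_ball_zero_iff]
    have := norm_add_le (w - z0) z0
    simp at this; linarith
  have := norm_deriv_le_of_forall_mem_sphere_norm_le (c := z0) (R := 1/10) (f := h)
    (C := 44 * (Real.log B + 1)) (by norm_num) ((hhd.mono hsb).diffContOnCl_ball subset_rfl)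
    (by
      intro w hw
      apply hhb
      simp only [mem_sphere_iff_norm] at hw
      have := norm_add_le (w - z0) z0
      simp at this; linarith)
  linarith

theorem landau_step (d : ℝ) (hd : 0 < d) (z0 ρ : ℂ) (hz0 : ‖z0‖ ≤ 21/10) (f : ℂ → ℂ) (B : ℝ)
    (hf : DifferentiableOn ℂ f (Metric.ball 0 3)) (hf0 : f 0 ≠ 0) (hB : 0 ≤ B)
    (hbd : ∀ z ∈ Metric.closedBall (0:ℂ) (5/2), ‖f z‖ ≤ B * ‖f 0‖)
    (hρ : ‖ρ‖ ≤ 23/10) (hfρ : f ρ = 0) (hdρ : d ≤ ‖z0 - ρ‖) :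
    ∃ f1 : ℂ → ℂ, DifferentiableOn ℂ f1 (Metric.ball 0 3) ∧ f1 0 ≠ 0 ∧
      (∀ z ∈ Metric.closedBall (0:ℂ) (5/2), ‖f1 z‖ ≤ (B * (23/25)) * ‖f1 0‖) ∧
      (∀ w ∈ Metric.closedBall (0:ℂ) (23/10), f1 w = 0 → f w = 0) ∧
      ‖deriv f z0 / f z0‖ ≤ ‖deriv f1 z0 / f1 z0‖ + (1 / d + 5/2) := by
  have hρ0 : ρ ≠ 0 := by rintro rfl; exact hf0 hfρ
  have hρpos : 0 < ‖ρ‖ := norm_pos_iff.2 hρ0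
  set q : ℂ → ℂ := fun z => (25/4 - starRingEnd ℂ ρ * z) * (2/5) with hq
  set g : ℂ → ℂ := dslope f ρ with hg
  have hfg : ∀ z, f z = (z - ρ) * g z := by
    intro z
    have := sub_smul_dslope f ρ z
    rw [hfρ, sub_zero, smul_eq_mul] at this
    exact this.symm
  have hgd : DifferentiableOn ℂ g (Metric.ball 0 3) := by
    rw [hg, differentiableOn_dslope]
    · exact hf
    · apply Metric.isOpen_ball.mem_nhds
      rw [mem_ball_zero_iff]; linarith
  have hqd : Differentiable ℂ q := by rw [hq]; fun_prop
  have hqne : ∀ z : ℂ, ‖z‖ ≤ 23/10 → 19/20 ≤ ‖25/4 - starRingEnd ℂ ρ * z‖ := by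
    intro z hz
    have h1 := norm_sub_norm_le (25/4 : ℂ) (starRingEnd ℂ ρ * z)
    have h2 : ‖starRingEnd ℂ ρ * z‖ ≤ 23/10 * (23/10) := by
      rw [norm_mul, RCLike.norm_conj]; gcongr
    have h3 : ‖(25/4 : ℂ)‖ = 25/4 := by simp
    linarith
  have hf1d : DifferentiableOn ℂ (fun z => g z * q z) (Metric.ball 0 3) :=
    hgd.mul hqd.differentiableOn
  have hg0 : g 0 ≠ 0 := by
    intro h; apply hf0; rw [hfg, h, mul_zero]
  have hf10 : ‖f 0‖ ≤ 23/25 * ‖g 0 * q 0‖ := by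
    rw [hfg 0, norm_mul, norm_mul]
    have : ‖q 0‖ = 5/2 := by simp [hq]; norm_num
    rw [this, zero_sub, norm_neg]
    nlinarith [norm_nonneg (g 0)]
  refine ⟨fun z => g z * q z, hf1d, ?_, ?_, ?_, ?_⟩
  · refine mul_ne_zero hg0 ?_
    simp [hq]
  · intro z hz
    have hcl : closure (Metric.ball (0:ℂ) (5/2)) = Metric.closedBall 0 (5/2) :=
      closure_ball _ (by norm_num)
    refine norm_le_of_forall_mem_frontier_norm_le (f := fun z => g z * q z)
      (z := z) (U := Metric.ball (0:ℂ) (5/2))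
      Metric.isBounded_ball ?_ ?_ (by rwa [hcl])
    · apply DifferentiableOn.diffContOnCl
      rw [hcl]
      exact hf1d.mono (Metric.closedBall_subset_ball (by norm_num))
    · intro w hw
      rw [frontier_ball _ (by norm_num)] at hw
      have hw' : ‖w‖ = 5/2 := by simpa using hw
      have h1 := hbd w (Metric.sphere_subset_closedBall hw)
      have h2 : ‖q w‖ = ‖w - ρ‖ := by
        have : (25/4 - starRingEnd ℂ ρ * w) = starRingEnd ℂ (w - ρ) * w := by
          rw [map_sub, sub_mul, ← normSq_eq_conj_mul_self, normSq_eq_norm_sq, hw']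
          push_cast; ring
        simp only [hq]
        rw [this, norm_mul, norm_mul, RCLike.norm_conj, hw']
        simp; ring
      rw [norm_mul, h2, mul_comm, ← norm_mul, ← hfg]
      refine h1.trans ?_
      rw [mul_assoc]
      gcongr
  · intro w hw h
    rw [mem_closedBall_zero_iff] at hw
    rcases mul_eq_zero.1 h with h | h
    · rw [hfg, h, mul_zero]
    · exfalso
      have h1 := hqne w hw
      simp only [hq] at h
      rcases mul_eq_zero.1 h with h | h
      · rw [h] at h1; simp at h1; linarith
      · norm_num at h
  · by_cases hfz : f z0 = 0
    · rw [hfz, div_zero, norm_zero]; positivity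
    have hz0b : z0 ∈ Metric.ball (0:ℂ) 3 := by rw [mem_ball_zero_iff]; linarith
    have hgz : g z0 ≠ 0 := by intro h; apply hfz; rw [hfg, h, mul_zero]
    have hzρ : z0 - ρ ≠ 0 := by intro h; apply hfz; rw [hfg, h, zero_mul]
    have hqz := hqne z0 (by linarith)
    have hqz' : 25/4 - starRingEnd ℂ ρ * z0 ≠ 0 := by
      intro h; rw [h] at hqz; simp at hqz; linarith
    have hqz2 : q z0 ≠ 0 := mul_ne_zero hqz' (by norm_num)
    have hgdz : DifferentiableAt ℂ g z0 := hgd.differentiableAt (Metric.isOpen_ball.mem_nhds hz0b)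
    have e1 : deriv f z0 / f z0 = 1 / (z0 - ρ) + deriv g z0 / g z0 := by
      have : f = fun z => (z - ρ) * g z := funext hfg
      rw [this, ← logDeriv_apply, logDeriv_mul (f := fun z => z - ρ) z0 hzρ hgz (by fun_prop) hgdz, logDeriv_apply,
        logDeriv_apply]
      simp
    have e2 : deriv (fun z => g z * q z) z0 / (g z0 * q z0) =
        deriv g z0 / g z0 + (- starRingEnd ℂ ρ) / (25/4 - starRingEnd ℂ ρ * z0) := by
      have := logDeriv_mul z0 hgz hqz2 hgdz hqd.differentiableAt
      rw [logDeriv_apply, logDeriv_apply, logDeriv_apply] at this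
      rw [this]
      congr 1
      have : deriv q z0 = - starRingEnd ℂ ρ * (2/5) := by
        have : HasDerivAt q ((0 - starRingEnd ℂ ρ * 1) * (2/5)) z0 :=
          (((hasDerivAt_const z0 _).sub ((hasDerivAt_id z0).const_mul _)).mul_const _)
        rw [this.deriv]; ring
      rw [this]
      simp only [hq]
      rw [mul_div_mul_right _ _ (by norm_num)]
    have e3 : deriv f z0 / f z0 = deriv (fun z => g z * q z) z0 / (g z0 * q z0) +
        (1 / (z0 - ρ) + starRingEnd ℂ ρ / (25/4 - starRingEnd ℂ ρ * z0)) := by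
      rw [e1, e2]; ring
    rw [e3]
    refine (norm_add_le _ _).trans ?_
    gcongr
    refine (norm_add_le _ _).trans ?_
    gcongr
    · rw [norm_div, norm_one]; gcongr
    · rw [norm_div, RCLike.norm_conj, div_le_iff₀ (by linarith)]
      linarith

theorem landau (d : ℝ) (hd : 0 < d) (z0 : ℂ) (hz0 : ‖z0‖ ≤ 21/10) (k : ℕ) :
    ∀ (f : ℂ → ℂ) (B : ℝ),
    DifferentiableOn ℂ f (Metric.ball 0 3) → f 0 ≠ 0 →
    1 ≤ B → B ≤ (25/23) ^ k →
    (∀ z ∈ Metric.closedBall (0:ℂ) (5/2), ‖f z‖ ≤ B * ‖f 0‖) →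
    (∀ ρ ∈ Metric.closedBall (0:ℂ) (23/10), f ρ = 0 → d ≤ ‖z0 - ρ‖) →
    ‖deriv f z0 / f z0‖ ≤ 440 * (Real.log B + 1) + k * (1 / d + 5/2) := by
  induction k with
  | zero =>
    intro f B hf hf0 hB hBk hbd hz
    by_cases hne : ∀ z ∈ Metric.closedBall (0:ℂ) (23/10), f z ≠ 0
    · have := landau_base f B z0 hf hne hB hbd hz0
      simpa using this
    · push Not at hne
      obtain ⟨ρ, hρ, hfρ⟩ := hne
      obtain ⟨f1, h1, h2, h3, -⟩ := landau_step d hd z0 ρ hz0 f B hf hf0 (by linarith) hbd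
        (by simpa using hρ) hfρ (hz ρ hρ hfρ)
      have h4 := h3 0 (by simp; norm_num)
      have := norm_pos_iff.2 h2
      simp at hBk
      nlinarith
  | succ k ih =>
    intro f B hf hf0 hB hBk hbd hz
    by_cases hne : ∀ z ∈ Metric.closedBall (0:ℂ) (23/10), f z ≠ 0
    · have := landau_base f B z0 hf hne hB hbd hz0
      refine this.trans ?_
      have : 0 ≤ ((k+1 : ℕ) : ℝ) * (1 / d + 5/2) := by positivity
      linarith
    · push Not at hne
      obtain ⟨ρ, hρ, hfρ⟩ := hne
      obtain ⟨f1, h1, h2, h3, h4, h5⟩ := landau_step d hd z0 ρ hz0 f B hf hf0 (by linarith) hbd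
        (by simpa using hρ) hfρ (hz ρ hρ hfρ)
      have hB1 : 1 ≤ B * (23/25) := by
        have h4 := h3 0 (by simp; norm_num)
        have := norm_pos_iff.2 h2
        by_contra hcon
        push Not at hcon
        nlinarith
      have := ih f1 (B * (23/25)) h1 h2 hB1 (by rw [pow_succ] at hBk; linarith) h3
        (fun w hw hw0 => hz w hw (h4 w hw hw0))
      have hlog : Real.log (B * (23/25)) ≤ Real.log B :=
        Real.log_le_log (by linarith) (by linarith)
      push_cast
      linarith

theorem mellin_strip_bound (f : ℝ → ℂ) (a b : ℝ) (ha : MellinConvergent f a)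
    (hb : MellinConvergent f b) :
    ∃ C : ℝ, 0 < C ∧ ∀ s : ℂ, a ≤ s.re → s.re ≤ b → ‖mellin f s‖ ≤ C := by
  let g : ℝ → ℝ := fun t => ‖(t : ℂ) ^ ((a:ℂ) - 1) • f t‖ + ‖(t : ℂ) ^ ((b:ℂ) - 1) • f t‖
  have hg : MeasureTheory.IntegrableOn g (Set.Ioi 0) := ha.norm.add hb.norm
  refine ⟨|∫ t in Set.Ioi 0, g t| + 1, by positivity, fun s h1 h2 => ?_⟩
  rw [mellin]
  have : ‖∫ t : ℝ in Set.Ioi 0, (t : ℂ) ^ (s - 1) • f t‖ ≤ ∫ t in Set.Ioi 0, g t := by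
    apply MeasureTheory.norm_integral_le_of_norm_le hg
    rw [MeasureTheory.ae_restrict_iff' measurableSet_Ioi]
    refine Filter.Eventually.of_forall fun t ht => ?_
    have ht' : 0 < t := ht
    simp only [g, norm_smul, norm_cpow_eq_rpow_re_of_pos ht', sub_re, ofReal_re, one_re]
    rw [← add_mul]
    gcongr
    rcases le_total 1 t with h | h
    · have := Real.rpow_le_rpow_of_exponent_le h (sub_le_sub_right h2 1)
      have := Real.rpow_nonneg ht'.le (a - 1)
      linarith
    · have := Real.rpow_le_rpow_of_exponent_ge ht' h (sub_le_sub_right h1 1)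
      have := Real.rpow_nonneg ht'.le (b - 1)
      linarith
  have := le_abs_self (∫ t in Set.Ioi 0, g t)
  linarith

theorem Gamma_strip_bound : ∃ C : ℝ, 0 < C ∧ ∀ s : ℂ, 1/4 ≤ s.re → s.re ≤ 3/2 → ‖Gamma s‖ ≤ C := by
  have hc : ∀ a : ℝ, 0 < a → MellinConvergent (fun x : ℝ => (Real.exp (-x) : ℂ)) a := by
    intro a ha
    have := GammaIntegral_convergent (s := a) (by simpa using ha)
    refine this.congr_fun (fun x _ => ?_) measurableSet_Ioi
    simp [mul_comm]
  obtain ⟨C, hC, h⟩ := mellin_strip_bound _ (1/4) (3/2) (hc _ (by norm_num)) (hc _ (by norm_num))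
  refine ⟨C, hC, fun s h1 h2 => ?_⟩
  rw [Gamma_eq_integral (by linarith), GammaIntegral_eq_mellin]
  simpa using h s h1 h2

theorem completed_strip_bound : ∃ C : ℝ, 0 < C ∧ ∀ s : ℂ, -1/2 ≤ s.re → s.re ≤ 3/2 →
    ‖completedRiemannZeta₀ s‖ ≤ C := by
  have hc : ∀ a : ℝ, MellinConvergent (HurwitzZeta.hurwitzEvenFEPair 0).f_modif a := fun a =>
    ((HurwitzZeta.hurwitzEvenFEPair 0).isStrongFEPair_toStrongFEPair.hasMellin a).1
  obtain ⟨C, hC, h⟩ := mellin_strip_bound _ (-1/4) (3/4) (hc _) (hc _)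
  refine ⟨C, hC, fun s h1 h2 => ?_⟩
  have e : completedRiemannZeta₀ s = mellin (HurwitzZeta.hurwitzEvenFEPair 0).f_modif (s/2) / 2 := rfl
  have e2 : (s/2).re = s.re/2 := by simp
  have := h (s/2) (by rw [e2]; linarith) (by rw [e2]; linarith)
  rw [e, norm_div]
  simp only [norm_ofNat]
  linarith

theorem norm_cos_le_cosh (z : ℂ) : ‖cos z‖ ≤ Real.cosh z.im := by
  rw [Complex.cos, Real.cosh_eq, norm_div]
  simp only [norm_ofNat]
  gcongr
  refine (norm_add_le _ _).trans (le_of_eq ?_)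
  simp [norm_exp]
  ring

theorem norm_sin_le_cosh (z : ℂ) : ‖sin z‖ ≤ Real.cosh z.im := by
  rw [Complex.sin, Real.cosh_eq, norm_div, norm_mul]
  simp only [norm_ofNat, norm_I, mul_one]
  gcongr
  refine (norm_sub_le _ _).trans (le_of_eq ?_)
  simp [norm_exp]

theorem cosh_le_exp {x : ℝ} (hx : 0 ≤ x) : Real.cosh x ≤ Real.exp x := by
  rw [Real.cosh_eq]
  have : Real.exp (-x) ≤ Real.exp x := Real.exp_le_exp.2 (by linarith)
  linarith

theorem zeta_exp_bound : ∃ C : ℝ, 0 < C ∧ ∀ s : ℂ, -1/2 ≤ s.re → s.re ≤ 3/2 → 1 ≤ s.im →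
    ‖riemannZeta s‖ ≤ C * Real.exp (2 * s.im) := by
  obtain ⟨C1, hC1, h1⟩ := completed_strip_bound
  obtain ⟨C2, hC2, h2⟩ := Gamma_strip_bound
  refine ⟨(C1 + 2) * (4 * C2), by positivity, fun s ha hb ht => ?_⟩
  have hs : 1 ≤ ‖s‖ := ht.trans (im_le_norm s)
  have hs0 : s ≠ 0 := by rintro rfl; simp at hs; linarith
  have hs1 : 1 ≤ ‖1 - s‖ := by
    have := abs_im_le_norm (1 - s)
    simp only [sub_im, one_im, zero_sub, abs_neg] at this
    exact (ht.trans (le_abs_self _)).trans this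
  rw [riemannZeta_eq_completedRiemannZeta₀ hs0, norm_div, div_eq_mul_inv, mul_assoc]
  have b1 : ‖completedRiemannZeta₀ s - 1 / s - 1 / (1 - s)‖ ≤ C1 + 2 := by
    have e1 : ‖1/s‖ ≤ 1 := by rw [norm_div, norm_one]; exact div_le_one_of_le₀ hs (norm_nonneg _)
    have e2 : ‖1/(1-s)‖ ≤ 1 := by
      rw [norm_div, norm_one]; exact div_le_one_of_le₀ hs1 (norm_nonneg _)
    have := norm_sub_le (completedRiemannZeta₀ s - 1 / s) (1/(1-s))
    have := norm_sub_le (completedRiemannZeta₀ s) (1 / s)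
    have := h1 s ha hb
    linarith
  have b2 : ‖(Real.pi : ℂ) ^ (-s / 2)‖⁻¹ ≤ 4 := by
    rw [norm_cpow_eq_rpow_re_of_pos Real.pi_pos, ← Real.rpow_neg Real.pi_pos.le]
    have : -(-s/2).re = s.re / 2 := by simp; ring
    rw [this]
    have h3 : Real.pi ^ (s.re/2) ≤ Real.pi ^ (1:ℝ) :=
      Real.rpow_le_rpow_of_exponent_le (by linarith [Real.pi_gt_three]) (by linarith)
    rw [Real.rpow_one] at h3
    linarith [Real.pi_lt_four]
  have b3 : ‖Gamma (s/2)‖⁻¹ ≤ C2 * Real.exp (2 * s.im) := by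
    have hG : Gamma (s/2) ≠ 0 := by
      apply Gamma_ne_zero
      intro m hm
      have := congrArg im hm
      simp at this; linarith
    have hG1 : Gamma (1 - s/2) ≠ 0 := by
      apply Gamma_ne_zero
      intro m hm
      have := congrArg im hm
      simp at this; linarith
    have hr := Gamma_mul_Gamma_one_sub (s/2)
    have hsin : sin (Real.pi * (s/2)) ≠ 0 := by
      intro h; rw [h, div_zero] at hr; exact mul_ne_zero hG hG1 hr
    have hpi : (Real.pi : ℂ) ≠ 0 := by exact_mod_cast Real.pi_ne_zero
    have hinv : (Gamma (s/2))⁻¹ = Gamma (1 - s/2) * sin (Real.pi * (s/2)) / Real.pi := by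
      rw [eq_div_iff hsin] at hr
      rw [eq_div_iff hpi, inv_mul_eq_iff_eq_mul₀ hG, ← mul_assoc]
      exact hr.symm
    rw [← norm_inv, hinv, norm_div, norm_mul]
    have e1 := h2 (1 - s/2) (by simp; linarith) (by simp; linarith)
    have e2 : ‖sin (Real.pi * (s/2))‖ ≤ Real.exp (2 * s.im) := by
      refine (norm_sin_le_cosh _).trans ?_
      have : ((Real.pi : ℂ) * (s/2)).im = Real.pi * (s.im/2) := by simp
      rw [this]
      refine (cosh_le_exp (by positivity)).trans (Real.exp_le_exp.2 ?_)
      nlinarith [Real.pi_lt_four]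
    have e3 : (1:ℝ) ≤ ‖(Real.pi : ℂ)‖ := by
      simp [abs_of_pos Real.pi_pos]; linarith [Real.pi_gt_three]
    refine (div_le_self (by positivity) e3).trans ?_
    gcongr
  rw [norm_mul, mul_inv]
  rw [mul_assoc 4 C2]
  gcongr

theorem local_hadamard (f : ℂ → ℂ) (a b T M σ : ℝ) (ha : -2 ≤ a) (hab : a < b) (hb : b ≤ 2)
    (hσ : σ ∈ Set.Icc a b) (hT : 0 < T) (hM : 0 ≤ M)
    (hd : ∀ s : ℂ, s.re ∈ Set.Icc a b → s.im ∈ Set.Icc (T/2) (3*T/2) → DifferentiableAt ℂ f s)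
    (hl : ∀ s : ℂ, s.re = a → s.im ∈ Set.Icc (T/2) (3*T/2) → ‖f s‖ ≤ M)
    (hr : ∀ s : ℂ, s.re = b → s.im ∈ Set.Icc (T/2) (3*T/2) → ‖f s‖ ≤ M)
    (hh : ∀ s : ℂ, s.re ∈ Set.Icc a b → s.im ∈ Set.Icc (T/2) (3*T/2) →
      ‖f s‖ ≤ M * Real.exp (T^2/4)) :
    ‖f (σ + T * I)‖ ≤ Real.exp 4 * M := by
  have hT2 : T/2 < 3*T/2 := by linarith
  let g : ℂ → ℂ := fun s => f s * cexp ((s - T * I)^2)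
  have hgn : ∀ s : ℂ, ‖g s‖ = ‖f s‖ * Real.exp (s.re^2 - (s.im - T)^2) := by
    intro s
    simp only [g, norm_mul, norm_exp]
    congr 2
    simp [pow_two]
  have hcl : closure (Set.Ioo a b ×ℂ Set.Ioo (T/2) (3*T/2)) =
      Set.Icc a b ×ℂ Set.Icc (T/2) (3*T/2) := by
    rw [closure_reProdIm, closure_Ioo hab.ne, closure_Ioo hT2.ne]
  have hbd : Bornology.IsBounded (Set.Ioo a b ×ℂ Set.Ioo (T/2) (3*T/2)) :=
    (Metric.isBounded_Ioo a b).reProdIm (Metric.isBounded_Ioo _ _)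
  have hsq : ∀ x ∈ Set.Icc a b, x^2 ≤ 4 := by
    intro x hx
    have := hx.1; have := hx.2
    nlinarith
  have key : ‖g (σ + T * I)‖ ≤ Real.exp 4 * M := by
    refine norm_le_of_forall_mem_frontier_norm_le hbd (f := g) ?_ ?_ (z := σ + T * I) ?_
    · apply DifferentiableOn.diffContOnCl
      rw [hcl]
      intro s hs
      refine DifferentiableAt.differentiableWithinAt ?_
      exact (hd s hs.1 hs.2).mul (by fun_prop)
    · intro s hs
      rw [frontier_reProdIm, closure_Ioo hab.ne, closure_Ioo hT2.ne, frontier_Ioo hab,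
        frontier_Ioo hT2] at hs
      rw [hgn]
      rcases hs with ⟨h1, h2⟩ | ⟨h1, h2⟩
      · have h1' : s.re ∈ Set.Icc a b := h1
        have h2' : s.im = T/2 ∨ s.im = 3*T/2 := by simpa using h2
        have h3 : (s.im - T)^2 = T^2/4 := by rcases h2' with h | h <;> rw [h] <;> ring
        have h4 : s.im ∈ Set.Icc (T/2) (3*T/2) := by
          rcases h2' with h | h <;> rw [h] <;> constructor <;> linarith
        calc ‖f s‖ * Real.exp (s.re^2 - (s.im - T)^2)
            ≤ (M * Real.exp (T^2/4)) * Real.exp (4 - T^2/4) := by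
              gcongr
              · exact hh s h1' h4
              · exact hsq _ h1'
              · exact h3.ge
          _ = Real.exp 4 * M := by
              rw [mul_assoc, ← Real.exp_add]; ring_nf
      · have h2' : s.im ∈ Set.Icc (T/2) (3*T/2) := h2
        have h1' : s.re = a ∨ s.re = b := by simpa using h1
        have h4 : s.re ∈ Set.Icc a b := by
          rcases h1' with h | h <;> rw [h] <;> constructor <;> linarith
        rw [mul_comm]
        have : ‖f s‖ ≤ M := by
          rcases h1' with h | h
          · exact hl s h h2'
          · exact hr s h h2'
        gcongr
        have := hsq _ h4
        nlinarith [sq_nonneg (s.im - T)]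
    · rw [hcl]
      refine ⟨?_, ?_⟩
      · simpa using hσ
      · simp; constructor <;> linarith
  refine le_trans ?_ key
  rw [hgn]
  simp
  exact le_mul_of_one_le_right (norm_nonneg _) (Real.one_le_exp (sq_nonneg _))

theorem Gamma_cosh_half (s : ℂ) (h : s.re = 1/2) : ‖Gamma s‖ * Real.cosh (Real.pi * s.im / 2) ≤ 2 := by
  have hc : (starRingEnd ℂ) s = 1 - s := by
    apply Complex.ext <;> simp [h]; norm_num
  have h1 := Gamma_mul_Gamma_one_sub s
  rw [← hc, Gamma_conj] at h1
  have h2 := congrArg norm h1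
  rw [norm_mul, norm_conj, norm_div] at h2
  have h3 : sin (Real.pi * s) = (Real.cosh (Real.pi * s.im) : ℝ) := by
    have : (Real.pi : ℂ) * s = Real.pi / 2 - (-(Real.pi * s.im : ℝ) * I) := by
      apply Complex.ext <;> simp [h]; ring
    rw [this, sin_pi_div_two_sub, cos_mul_I, cosh_neg, ofReal_cosh]
  rw [h3, norm_real, norm_real, Real.norm_of_nonneg Real.pi_pos.le,
    Real.norm_of_nonneg (Real.cosh_pos _).le] at h2
  have h5 : Real.cosh (Real.pi * s.im) = 2 * Real.cosh (Real.pi * s.im / 2)^2 - 1 := by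
    have := Real.cosh_sq (Real.pi * s.im / 2)
    have h6 := Real.cosh_two_mul (Real.pi * s.im / 2)
    rw [show 2 * (Real.pi * s.im / 2) = Real.pi * s.im by ring] at h6
    linarith
  have h6 := Real.one_le_cosh (Real.pi * s.im / 2)
  set c := Real.cosh (Real.pi * s.im / 2)
  rw [h5, eq_div_iff (by nlinarith)] at h2
  have h7 : (‖Gamma s‖ * c)^2 ≤ 2^2 := by
    have : ‖Gamma s‖ * ‖Gamma s‖ * c^2 ≤ ‖Gamma s‖ * ‖Gamma s‖ * (2 * c^2-1) := by
      gcongr; nlinarith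
    nlinarith [Real.pi_lt_four]
  exact (abs_le_of_sq_le_sq' h7 (by norm_num)).2

theorem cos_le_cosh_half (s : ℂ) :
    ‖cos (Real.pi * s / 2)‖ ≤ Real.cosh (Real.pi * s.im / 2) := by
  refine (norm_cos_le_cosh _).trans (le_of_eq ?_)
  congr 1
  simp [mul_div_assoc]

theorem Gamma_cos_bound : ∃ C : ℝ, 0 < C ∧ ∀ s : ℂ, 1/2 ≤ s.re → s.re ≤ 3/2 → 12 ≤ s.im →
    ‖Gamma s * cos (Real.pi * s / 2)‖ ≤ C * s.im ^ (s.re - 1/2) := by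
  obtain ⟨C2, hC2, h2⟩ := Gamma_strip_bound
  refine ⟨Real.exp 4 * (4 + C2), by positivity, fun s ha hb ht => ?_⟩
  set T := s.im with hTdef
  have hT : 0 < T := by linarith
  have hT0 : (T : ℂ) ≠ 0 := by exact_mod_cast hT.ne'
  have hTs : ∀ z : ℂ, ‖(T:ℂ) ^ (1/2 - z)‖ = T ^ (1/2 - z.re) := by
    intro z
    rw [norm_cpow_eq_rpow_re_of_pos hT]
    congr 1
    simp
  have key := local_hadamard (fun z => Gamma z * cos (Real.pi * z / 2) * (T:ℂ) ^ (1/2 - z))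
    (1/2) (3/2) T (4 + C2) s.re (by norm_num) (by norm_num) (by norm_num) ⟨ha, hb⟩ hT
    (by positivity) ?_ ?_ ?_ ?_
  · rw [hTdef, re_add_im, ← hTdef, norm_mul, hTs] at key
    rw [show 1/2 - s.re = -(s.re - 1/2) by ring, Real.rpow_neg hT.le,
      ← div_eq_mul_inv, div_le_iff₀ (by positivity)] at key
    exact key
  · intro z hz hz'
    have hz0 : 0 < z.im := by have := hz'.1; linarith
    refine DifferentiableAt.mul (DifferentiableAt.mul ?_ (by fun_prop)) ?_
    · apply differentiableAt_Gamma
      intro m hm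
      have := congrArg im hm
      simp at this; linarith
    · exact ((differentiableAt_const _).sub differentiableAt_id).const_cpow (Or.inl hT0)
  · intro z hz hz'
    rw [norm_mul, norm_mul, hTs, hz, sub_self, Real.rpow_zero, mul_one]
    have := Gamma_cosh_half z hz
    have := mul_le_mul_of_nonneg_left (cos_le_cosh_half z) (norm_nonneg (Gamma z))
    linarith
  · intro z hz hz'
    have hz1 := hz'.1
    have hz2 := hz'.2
    rw [norm_mul, hTs, hz]
    rw [show (1/2 - 3/2 : ℝ) = -1 by norm_num, Real.rpow_neg_one, ← div_eq_mul_inv,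
      div_le_iff₀ hT]
    have hz0 : z - 1 ≠ 0 := by
      intro h
      have := congrArg im h
      simp at this; linarith
    have e : Gamma z = (z - 1) * Gamma (z - 1) := by
      rw [← Gamma_add_one _ hz0]; ring_nf
    have hre : (z-1).re = 1/2 := by simp [hz]; norm_num
    have g1 := Gamma_cosh_half (z - 1) hre
    rw [show (z-1).im = z.im by simp] at g1
    have g2 : ‖z - 1‖ ≤ 1/2 + 3*T/2 := by
      refine (norm_le_abs_re_add_abs_im _).trans ?_
      rw [hre]
      rw [show (z-1).im = z.im by simp, abs_of_pos (by linarith : 0 < z.im),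
        abs_of_pos (by norm_num : (0:ℝ) < 1/2)]
      linarith
    have g3 := cos_le_cosh_half z
    rw [norm_mul, e, norm_mul]
    calc ‖z-1‖ * ‖Gamma (z-1)‖ * ‖cos (Real.pi * z / 2)‖
        ≤ ‖z-1‖ * ‖Gamma (z-1)‖ * Real.cosh (Real.pi * z.im / 2) := by gcongr
      _ = ‖z-1‖ * (‖Gamma (z-1)‖ * Real.cosh (Real.pi * z.im / 2)) := by ring
      _ ≤ (1/2 + 3*T/2) * 2 := by gcongr
      _ ≤ _ := by nlinarith
  · intro z hz hz'
    have hz1 := hz'.1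
    have hz2 := hz'.2
    simp only [norm_mul, hTs]
    have e1 := h2 z (by linarith [hz.1]) hz.2
    have e2 : ‖cos (Real.pi * z / 2)‖ ≤ Real.exp (T^2/4) := by
      refine (norm_cos_le_cosh _).trans ?_
      have : ((Real.pi : ℂ) * z/2).im = Real.pi * (z.im/2) := by simp [mul_div_assoc]
      rw [this]
      refine (cosh_le_exp (by have := Real.pi_pos; apply mul_nonneg <;> linarith)).trans
        (Real.exp_le_exp.2 ?_)
      nlinarith [Real.pi_lt_four]
    have e3 : T ^ (1/2 - z.re) ≤ 1 :=
      Real.rpow_le_one_of_one_le_of_nonpos (by linarith) (by linarith [hz.1])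
    calc _ ≤ C2 * Real.exp (T^2/4) * 1 := by gcongr
      _ ≤ _ := by rw [mul_one]; gcongr; linarith

theorem zeta_le_tsum (s : ℂ) (hs : 1 < s.re) :
    ‖riemannZeta s‖ ≤ ∑' n : ℕ, 1 / (n : ℝ) ^ s.re := by
  rw [zeta_eq_tsum_one_div_nat_cpow hs]
  have h : ∀ n : ℕ, ‖1 / (n : ℂ) ^ s‖ = 1 / (n:ℝ) ^ s.re := by
    intro n
    rw [norm_div, norm_one, norm_natCast_cpow_of_re_ne_zero _ (by linarith)]
  have hsum : Summable (fun n : ℕ => ‖1 / (n : ℂ) ^ s‖) := by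
    simp_rw [h]
    exact Real.summable_one_div_nat_rpow.2 hs
  refine (norm_tsum_le_tsum_norm hsum).trans (le_of_eq ?_)
  simp_rw [h]

theorem tsum_anti {a b : ℝ} (ha : 1 < a) (hab : a ≤ b) :
    ∑' n : ℕ, 1 / (n : ℝ) ^ b ≤ ∑' n : ℕ, 1 / (n : ℝ) ^ a := by
  refine Summable.tsum_le_tsum (fun n => ?_) (Real.summable_one_div_nat_rpow.2 (by linarith))
    (Real.summable_one_div_nat_rpow.2 ha)
  rcases Nat.eq_zero_or_pos n with rfl | hn
  · simp [Real.zero_rpow (by linarith : a ≠ 0), Real.zero_rpow (by linarith : b ≠ 0)]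
  · have : (1:ℝ) ≤ n := by exact_mod_cast hn
    gcongr

theorem zeta_right : ∃ C : ℝ, 0 < C ∧ (∀ s : ℂ, 1 < s.re → s.re ≤ 2 →
    ‖riemannZeta s‖ ≤ C / (s.re - 1)) ∧ (∀ s : ℂ, 3/2 ≤ s.re → ‖riemannZeta s‖ ≤ C) := by
  have h1 := tendsto_sub_mul_tsum_nat_rpow
  have h2 := h1.eventually (gt_mem_nhds (by norm_num : (1:ℝ) < 2))
  rw [Filter.Eventually, mem_nhdsGT_iff_exists_Ioo_subset] at h2
  obtain ⟨u, hu, h2⟩ := h2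
  have hu : 1 < u := hu
  set v := (1 + u)/2 with hv
  have hv1 : 1 < v := by rw [hv]; linarith
  have Znn : ∀ x : ℝ, 0 ≤ ∑' n : ℕ, 1 / (n : ℝ) ^ x := fun x => tsum_nonneg (fun n => by positivity)
  refine ⟨2 + (∑' n : ℕ, 1 / (n : ℝ) ^ v) + ∑' n : ℕ, 1 / (n : ℝ) ^ (3/2:ℝ), ?_, ?_, ?_⟩
  · linarith [Znn v, Znn (3/2)]
  · intro s hs hs2
    refine (zeta_le_tsum s hs).trans ?_
    have hp : 0 < s.re - 1 := by linarith
    rw [le_div_iff₀ hp]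
    rcases lt_or_ge s.re u with hlt | hge
    · have := h2 ⟨hs, hlt⟩
      have : (s.re - 1) * ∑' n : ℕ, 1 / (n : ℝ) ^ s.re < 2 := this
      linarith [Znn v, Znn (3/2)]
    · have e := tsum_anti hv1 (by rw [hv]; linarith : v ≤ s.re)
      have : (∑' n : ℕ, 1 / (n : ℝ) ^ s.re) * (s.re - 1) ≤ (∑' n : ℕ, 1 / (n : ℝ) ^ v) * 1 := by
        gcongr
        linarith
      linarith [Znn (3/2)]
  · intro s hs
    have := zeta_le_tsum s (by linarith)
    have := tsum_anti (by norm_num : (1:ℝ) < 3/2) hs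
    linarith [Znn v]

theorem zeta_two_lower (s : ℂ) (hs : s.re = 2) : 1/4 ≤ ‖riemannZeta s‖ := by
  have hs1 : 1 < s.re := by rw [hs]; norm_num
  have h : ∀ n : ℕ, ‖1 / (n : ℂ) ^ s‖ = 1 / (n:ℝ) ^ 2 := by
    intro n
    rw [norm_div, norm_one, norm_natCast_cpow_of_re_ne_zero _ (by linarith), hs]
    norm_num
  have hz := hasSum_zeta_two
  have hsn : Summable (fun n : ℕ => ‖1 / (n : ℂ) ^ s‖) := by
    simp_rw [h]; exact hz.summable
  have e1 := hsn.of_norm.sum_add_tsum_nat_add 2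
  rw [← zeta_eq_tsum_one_div_nat_cpow hs1] at e1
  have e2 := hz.summable.sum_add_tsum_nat_add 2
  rw [hz.tsum_eq] at e2
  have hs0 : s ≠ 0 := by rintro rfl; simp at hs
  simp [Finset.sum_range_succ, zero_cpow hs0] at e1 e2
  have e3 : ‖∑' n : ℕ, (((n:ℂ) + 2) ^ s)⁻¹‖ ≤ ∑' n : ℕ, (((n:ℝ) + 2) ^ 2)⁻¹ := by
    have hh : ∀ n : ℕ, ‖(((n:ℂ) + 2) ^ s)⁻¹‖ = (((n:ℝ) + 2) ^ 2)⁻¹ := by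
      intro n
      have := h (n+2)
      simpa using this
    have h4 : Summable (fun n : ℕ => ‖(((n:ℂ) + 2) ^ s)⁻¹‖) := by
      have := (summable_nat_add_iff 2).2 hsn
      simpa using this
    refine (norm_tsum_le_tsum_norm h4).trans (le_of_eq ?_)
    simp_rw [hh]
  have e4 : ∑' n : ℕ, (((n:ℝ) + 2) ^ 2)⁻¹ ≤ 3/4 := by
    have := Real.pi_lt_d2
    have := Real.pi_pos
    nlinarith
  have e5 := norm_sub_le (riemannZeta s) (∑' n : ℕ, (((n:ℂ) + 2) ^ s)⁻¹)
  rw [← e1, add_sub_cancel_right, norm_one, e1] at e5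
  linarith

theorem zeta_left : ∃ C : ℝ, 0 < C ∧ ∀ η : ℝ, 0 < η → η ≤ 1/2 → ∀ s : ℂ, s.re = -η → 12 ≤ s.im →
    ‖riemannZeta s‖ ≤ C / η * s.im ^ (1/2 + η) := by
  obtain ⟨C1, hC1, h1⟩ := Gamma_cos_bound
  obtain ⟨C2, hC2, h2, -⟩ := zeta_right
  refine ⟨2 * C1 * C2, by positivity, fun η h0 hη s hs ht => ?_⟩
  have hr : (1 - s).re = 1 + η := by simp [hs]
  have hfe := riemannZeta_one_sub (s := 1 - s) ?_ ?_
  · rw [sub_sub_cancel] at hfe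
    have hw : ‖Gamma (1-s) * cos (Real.pi * (1-s) / 2)‖ ≤ C1 * s.im ^ (1/2 + η) := by
      have := h1 ((starRingEnd ℂ) (1 - s)) (by rw [conj_re, hr]; linarith)
        (by rw [conj_re, hr]; linarith) (by simpa using ht)
      rw [conj_re, hr, Gamma_conj] at this
      have e : (Real.pi : ℂ) * (starRingEnd ℂ) (1-s) / 2 =
          (starRingEnd ℂ) (Real.pi * (1-s) / 2) := by
        rw [map_div₀, map_mul, conj_ofReal, Complex.conj_ofNat]
      rw [e, cos_conj, ← map_mul, norm_conj] at this
      refine this.trans (le_of_eq ?_)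
      rw [show ((starRingEnd ℂ) (1 - s)).im = s.im by simp,
        show 1 + η - 1/2 = 1/2 + η by ring]
    have hz := h2 (1 - s) (by rw [hr]; linarith) (by rw [hr]; linarith)
    rw [hr, add_sub_cancel_left] at hz
    have hp : ‖(2 * Real.pi : ℂ) ^ (-(1-s))‖ ≤ 1 := by
      have : (2 * Real.pi : ℂ) = ((2 * Real.pi : ℝ) : ℂ) := by push_cast; rfl
      rw [this, norm_cpow_eq_rpow_re_of_pos (by positivity)]
      apply Real.rpow_le_one_of_one_le_of_nonpos
      · linarith [Real.pi_gt_three]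
      · rw [neg_re, hr]; linarith
    rw [hfe, mul_assoc (2 * _) (Gamma _), norm_mul, norm_mul, norm_mul]
    have hnn : (0:ℝ) ≤ s.im := by linarith
    calc _ ≤ ‖(2:ℂ)‖ * 1 * (C1 * s.im ^ (1/2 + η)) * (C2 / η) := by gcongr
      _ = _ := by rw [norm_ofNat]; ring
  · intro m hm
    have := congrArg im hm
    simp at this; linarith
  · intro hm
    have := congrArg im hm
    simp at this; linarith

theorem zeta_convexity : ∃ C : ℝ, 0 < C ∧ ∀ η : ℝ, 0 < η → η ≤ 1/2 → ∀ s : ℂ, -η ≤ s.re →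
    s.re ≤ 1 + η → 24 ≤ s.im →
    ‖riemannZeta s‖ ≤ C / η * s.im ^ ((1 + η - s.re)/2) := by
  obtain ⟨C1, hC1, h1⟩ := zeta_left
  obtain ⟨C2, hC2, h2, -⟩ := zeta_right
  obtain ⟨C3, hC3, h3⟩ := zeta_exp_bound
  refine ⟨Real.exp 4 * (2 * C1 + C2 + C3), by positivity, fun η h0 hη s ha hb ht => ?_⟩
  set T := s.im with hTdef
  have hT : 0 < T := by linarith
  have hT0 : (T : ℂ) ≠ 0 := by exact_mod_cast hT.ne'
  have hTs : ∀ z : ℂ, ‖(T:ℂ) ^ ((z - 1 - η)/2)‖ = T ^ ((z.re - 1 - η)/2) := by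
    intro z
    rw [norm_cpow_eq_rpow_re_of_pos hT]
    congr 1
    simp
  have key := local_hadamard (fun z => riemannZeta z * (T:ℂ) ^ ((z - 1 - η)/2))
    (-η) (1 + η) T ((2 * C1 + C2 + C3)/η) s.re (by linarith) (by linarith) (by linarith) ⟨ha, hb⟩ hT
    (by positivity) ?_ ?_ ?_ ?_
  · rw [hTdef, re_add_im, ← hTdef, norm_mul, hTs] at key
    rw [show (s.re - 1 - η)/2 = -((1 + η - s.re)/2) by ring, Real.rpow_neg hT.le,
      ← div_eq_mul_inv, div_le_iff₀ (by positivity), ← mul_div_assoc] at key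
    exact key
  · intro z hz hz'
    have hz0 : 0 < z.im := by have := hz'.1; linarith
    refine DifferentiableAt.mul ?_ ?_
    · apply differentiableAt_riemannZeta
      rintro rfl
      simp at hz0
    · refine DifferentiableAt.const_cpow (by fun_prop) (Or.inl hT0)
  · intro z hz hz'
    have hz1 := hz'.1
    have hz2 := hz'.2
    rw [norm_mul, hTs, hz]
    have e := h1 η h0 hη z hz (by linarith)
    have e2 : z.im ^ (1/2 + η) ≤ 2 * T ^ (1/2 + η) := by
      have : z.im ^ (1/2 + η) ≤ (2 * T) ^ (1/2 + η) := by
        apply Real.rpow_le_rpow <;> linarith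
      refine this.trans ?_
      rw [Real.mul_rpow (by norm_num) hT.le]
      gcongr
      calc (2:ℝ) ^ (1/2 + η) ≤ 2 ^ (1:ℝ) :=
            Real.rpow_le_rpow_of_exponent_le (by norm_num) (by linarith)
        _ = 2 := by norm_num
    rw [show (-η - 1 - η)/2 = -(1/2 + η) by ring, Real.rpow_neg hT.le,
      ← div_eq_mul_inv, div_le_iff₀ (by positivity)]
    refine e.trans ?_
    calc C1 / η * z.im ^ (1/2 + η) ≤ C1 / η * (2 * T ^ (1/2 + η)) := by gcongr
      _ = (2 * C1) / η * T ^ (1/2 + η) := by ring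
      _ ≤ _ := by gcongr; linarith
  · intro z hz hz'
    rw [norm_mul, hTs, hz]
    rw [show (1 + η - 1 - η)/2 = 0 by ring, Real.rpow_zero, mul_one]
    have := h2 z (by linarith) (by linarith)
    rw [hz, add_sub_cancel_left] at this
    refine this.trans ?_
    gcongr
    linarith
  · intro z hz hz'
    have hz1 := hz'.1
    have hz2 := hz'.2
    rw [norm_mul, hTs]
    have e1 := h3 z (by linarith [hz.1]) (by linarith [hz.2]) (by linarith)
    have e2 : Real.exp (2 * z.im) ≤ Real.exp (T^2/4) := by
      apply Real.exp_le_exp.2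
      nlinarith
    have e3 : T ^ ((z.re - 1 - η)/2) ≤ 1 :=
      Real.rpow_le_one_of_one_le_of_nonpos (by linarith) (by linarith [hz.2])
    have e4 : C3 ≤ (2 * C1 + C2 + C3)/η := by
      rw [le_div_iff₀ h0]; nlinarith
    calc _ ≤ C3 * Real.exp (T^2/4) * 1 := by
          gcongr
          exact e1.trans (by gcongr)
      _ ≤ _ := by rw [mul_one]; gcongr

theorem zeta_poly : ∃ C : ℝ, 1 ≤ C ∧ ∀ s : ℂ, -1/2 ≤ s.re → 24 ≤ s.im →
    ‖riemannZeta s‖ ≤ C * s.im := by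
  obtain ⟨C1, hC1, h1⟩ := zeta_convexity
  obtain ⟨C2, hC2, -, h2⟩ := zeta_right
  refine ⟨2 * C1 + C2 + 1, by linarith, fun s hs ht => ?_⟩
  rcases le_total s.re (3/2) with h | h
  · have e := h1 (1/2) (by norm_num) le_rfl s (by linarith) (by linarith) ht
    have e2 : s.im ^ ((1 + 1/2 - s.re)/2) ≤ s.im := by
      calc s.im ^ ((1 + 1/2 - s.re)/2) ≤ s.im ^ (1:ℝ) :=
            Real.rpow_le_rpow_of_exponent_le (by linarith) (by linarith)
        _ = s.im := Real.rpow_one _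
    refine e.trans ?_
    calc C1 / (1/2) * s.im ^ ((1 + 1/2 - s.re)/2) ≤ C1 / (1/2) * s.im := by gcongr
      _ = 2 * C1 * s.im := by ring
      _ ≤ _ := by gcongr; linarith
  · have := h2 s h
    nlinarith

theorem zero_nontrivial (ρ : ℂ) (h : riemannZeta ρ = 0) (hi : 0 < ρ.im) : IsNontrivialZero ρ := by
  refine ⟨h, ?_, ?_⟩
  · by_contra hre
    push Not at hre
    have hfe := riemannZeta_one_sub (s := 1 - ρ) ?_ ?_
    · rw [sub_sub_cancel, h] at hfe
      have hz : riemannZeta (1 - ρ) ≠ 0 :=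
        riemannZeta_ne_zero_of_one_le_re (by simp; linarith)
      have hG : Gamma (1 - ρ) ≠ 0 := by
        apply Gamma_ne_zero
        intro m hm
        have := congrArg im hm
        simp at this; linarith
      have hc : cos (Real.pi * (1 - ρ) / 2) ≠ 0 := by
        intro hc
        obtain ⟨k, hk⟩ := Complex.cos_eq_zero_iff.1 hc
        have hpi : (Real.pi : ℂ) ≠ 0 := by exact_mod_cast Real.pi_ne_zero
        have hk2 : 1 - ρ = ((2 * k + 1 : ℝ) : ℂ) := by
          push_cast
          have : (Real.pi : ℂ) * (1 - ρ) = Real.pi * (2 * k + 1) := by linear_combination 2 * hk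
          exact mul_left_cancel₀ hpi this
        have := congrArg im hk2
        rw [ofReal_im] at this
        simp at this; linarith
      have hp : (2 * Real.pi : ℂ) ^ (-(1-ρ)) ≠ 0 := by
        rw [Ne, cpow_eq_zero_iff]
        have hpi : (Real.pi : ℂ) ≠ 0 := by exact_mod_cast Real.pi_ne_zero
        simp [hpi]
      exact (mul_ne_zero (mul_ne_zero (mul_ne_zero (mul_ne_zero two_ne_zero hp) hG) hc) hz) hfe.symm
    · intro m hm
      have := congrArg im hm
      simp at this; linarith
    · intro hm
      have := congrArg im hm
      simp at this; linarith
  · by_contra hre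
    push Not at hre
    exact riemannZeta_ne_zero_of_one_le_re hre h

theorem logderiv_bound (δ : ℝ) (hδ : 0 < δ) : ∃ K : ℝ, 0 < K ∧ ∀ T : ℝ, 100 ≤ T →
    10 ≤ Real.log T → AdmissibleHeight δ T → ∀ σ : ℝ, -1/10 ≤ σ → σ ≤ 11/10 →
    ‖deriv riemannZeta (σ + T * I) / riemannZeta (σ + T * I)‖ ≤ K * Real.log T ^ 2 := by
  obtain ⟨C, hC, hpoly⟩ := zeta_poly
  set A := Real.log (8 * C) + 1 with hA
  have hA1 : 1 ≤ A := by
    have := Real.log_nonneg (by linarith : 1 ≤ 8 * C)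
    linarith
  refine ⟨440 * (A + 1) + (25/2 * A + 1) * (1/δ + 5/2), by positivity, fun T hT hL hadm σ h1 h2 => ?_⟩
  set L := Real.log T with hLdef
  have hlogB : Real.log (8 * C * T) ≤ A * L := by
    rw [Real.log_mul (by positivity) (by positivity), ← hLdef]
    have : 0 ≤ Real.log (8 * C) := Real.log_nonneg (by linarith)
    nlinarith
  have hB1 : 1 ≤ 8 * C * T := by nlinarith
  have hlogB0 := Real.log_nonneg hB1
  have hk : 8 * C * T ≤ (25/23 : ℝ) ^ ⌈25/2 * Real.log (8 * C * T)⌉₊ := by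
    have hl : (2/25 : ℝ) ≤ Real.log (25/23) := by
      have := Real.one_sub_inv_le_log_of_pos (by norm_num : (0:ℝ) < 25/23)
      norm_num at this ⊢
      linarith
    rw [← Real.log_le_log_iff (by positivity) (by positivity), Real.log_pow]
    have := Nat.le_ceil (25/2 * Real.log (8 * C * T))
    nlinarith
  have hk2 := (Nat.ceil_lt_add_one (by positivity : 0 ≤ 25/2 * Real.log (8 * C * T))).le
  set k := ⌈25/2 * Real.log (8 * C * T)⌉₊
  have himz : ∀ z : ℂ, (2 + T * I + z).im = T + z.im := by intro z; simp
  have hrez : ∀ z : ℂ, (2 + T * I + z).re = 2 + z.re := by intro z; simp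
  have hLp : 0 < L := by linarith
  have key := landau (δ / L) (by positivity) ((σ - 2 : ℝ) : ℂ) ?_ k
    (fun z => riemannZeta (2 + T * I + z)) (8 * C * T) ?_ ?_ hB1 hk ?_ ?_
  · rw [deriv_comp_const_add] at key
    have e : (2 + T * I + ((σ - 2 : ℝ) : ℂ)) = σ + T * I := by push_cast; ring
    rw [e] at key
    refine key.trans ?_
    have hd : 1 / (δ / L) = L / δ := by field_simp
    rw [hd]
    have b1 : 440 * (Real.log (8 * C * T) + 1) ≤ 440 * (A + 1) * L^2 := by nlinarith
    have b2 : (k : ℝ) ≤ (25/2 * A + 1) * L := by nlinarith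
    have b3 : L / δ + 5/2 ≤ (1/δ + 5/2) * L := by
      have : L / δ = 1/δ * L := by ring
      nlinarith
    have b4 : (k:ℝ) * (L / δ + 5/2) ≤ ((25/2 * A + 1) * L) * ((1/δ + 5/2) * L) := by gcongr
    calc _ ≤ 440 * (A + 1) * L^2 + ((25/2 * A + 1) * L) * ((1/δ + 5/2) * L) := add_le_add b1 b4
      _ = _ := by ring
  · rw [norm_real, Real.norm_eq_abs, abs_le]
    constructor <;> linarith
  · intro z hz
    have hz' : ‖z‖ < 3 := by simpa using hz
    have := abs_le.1 ((abs_im_le_norm z).trans hz'.le)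
    refine DifferentiableAt.differentiableWithinAt ?_
    refine DifferentiableAt.comp z (differentiableAt_riemannZeta ?_) (by fun_prop)
    intro h
    have h' := congrArg im h
    rw [himz, one_im] at h'
    linarith
  · intro h
    have := zeta_two_lower (2 + T * I + 0) (by simp)
    rw [show riemannZeta (2 + T * I + 0) = 0 from h, norm_zero] at this
    norm_num at this
  · intro z hz
    have hz' : ‖z‖ ≤ 5/2 := by simpa using hz
    have e1 := abs_le.1 ((abs_im_le_norm z).trans hz')
    have e2 := abs_le.1 ((abs_re_le_norm z).trans hz')
    have e3 := hpoly (2 + T * I + z) (by rw [hrez]; linarith) (by rw [himz]; linarith)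
    have e4 := zeta_two_lower (2 + T * I + 0) (by simp)
    rw [himz] at e3
    calc _ ≤ C * (T + z.im) := e3
      _ ≤ C * (2 * T) := by gcongr; linarith
      _ = 8 * C * T * (1/4) := by ring
      _ ≤ _ := by gcongr
  · intro ρ hρ h0
    have hz' : ‖ρ‖ ≤ 23/10 := by simpa using hρ
    have e1 := abs_le.1 ((abs_im_le_norm ρ).trans hz')
    have hnt := zero_nontrivial _ h0 (by rw [himz]; linarith)
    have := hadm _ hnt
    rw [himz, show T - (T + ρ.im) = 0 - ρ.im by ring] at this
    have e := abs_im_le_norm (((σ - 2 : ℝ) : ℂ) - ρ)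
    rw [sub_im, ofReal_im] at e
    exact this.trans e

theorem iterderiv_bound (n : ℕ) : ∃ K : ℝ, 0 < K ∧ ∀ T : ℝ, 100 ≤ T →
    10 ≤ Real.log T → ∀ σ : ℝ, -(1 / Real.log T) ≤ σ → σ ≤ 1 + 1 / Real.log T →
    ‖iteratedDeriv n riemannZeta (σ + T * I)‖ ≤
      K * Real.log T ^ (n + 1) * Real.exp (Real.log T * ((1 - σ) / 2)) := by
  obtain ⟨C, hC, hconv⟩ := zeta_convexity
  refine ⟨n.factorial * (C * Real.exp (3/2)), by positivity, fun T hT hL σ h1 h2 => ?_⟩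
  have hTp : 0 < T := by linarith
  have hTexp : T = Real.exp (Real.log T) := (Real.exp_log hTp).symm
  set L := Real.log T with hLdef
  have hLp : 0 < L := by linarith
  set r := 1 / L with hr
  have hrp : 0 < r := by positivity
  have hrL : r * L = 1 := by rw [hr]; field_simp
  have hr1 : r ≤ 1/10 := by rw [hr]; gcongr
  have hb : ∀ z ∈ Metric.sphere ((σ:ℂ) + T * I) r, ‖riemannZeta z‖ ≤
      C * Real.exp (3/2) * L * Real.exp (L * ((1 - σ)/2)) := by
    intro z hz
    have hz' : ‖z - (σ + T * I)‖ ≤ r := by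
      rw [mem_sphere_iff_norm] at hz; exact hz.le
    have e1 := abs_le.1 ((abs_im_le_norm _).trans hz')
    have e2 := abs_le.1 ((abs_re_le_norm _).trans hz')
    simp at e1 e2
    have e3 := hconv (2 * r) (by positivity) (by linarith) z (by linarith) (by linarith) (by linarith)
    refine e3.trans ?_
    have e4 : z.im ^ ((1 + 2 * r - z.re)/2) ≤ 2 * (Real.exp (3/2) * Real.exp (L * ((1 - σ)/2))) := by
      have p0 : 0 ≤ (1 + 2 * r - z.re)/2 := by linarith
      have p1 : (1 + 2 * r - z.re)/2 ≤ 1 := by linarith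
      calc z.im ^ ((1 + 2 * r - z.re)/2) ≤ (2 * T) ^ ((1 + 2 * r - z.re)/2) := by
            apply Real.rpow_le_rpow <;> linarith
        _ = 2 ^ ((1 + 2 * r - z.re)/2) * T ^ ((1 + 2 * r - z.re)/2) :=
            Real.mul_rpow (by norm_num) hTp.le
        _ ≤ 2 ^ (1:ℝ) * T ^ ((1 + 2 * r - z.re)/2) := by
            gcongr
            norm_num
        _ = 2 * Real.exp (L * ((1 + 2 * r - z.re)/2)) := by
            rw [Real.rpow_one, Real.rpow_def_of_pos hTp]
        _ ≤ _ := by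
            rw [← Real.exp_add]
            gcongr
            nlinarith
    calc C / (2 * r) * z.im ^ ((1 + 2 * r - z.re)/2)
        ≤ C / (2 * r) * (2 * (Real.exp (3/2) * Real.exp (L * ((1 - σ)/2)))) := by gcongr
      _ = _ := by rw [hr]; field_simp
  have hd : DiffContOnCl ℂ riemannZeta (Metric.ball ((σ:ℂ) + T * I) r) := by
    apply DifferentiableOn.diffContOnCl_ball (U := Metric.closedBall ((σ:ℂ) + T * I) r) _ le_rfl
    intro z hz
    rw [mem_closedBall_iff_norm] at hz
    have e1 := abs_le.1 ((abs_im_le_norm _).trans hz)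
    simp at e1
    refine DifferentiableAt.differentiableWithinAt (differentiableAt_riemannZeta ?_)
    rintro rfl
    simp at e1; linarith
  refine (norm_iteratedDeriv_le_of_forall_mem_sphere_norm_le n hrp hd hb).trans (le_of_eq ?_)
  rw [hr, one_div, inv_pow, div_inv_eq_mul]
  ring

theorem int_exp_bound (L : ℝ) (hL : 0 < L) :
    ∫ σ in (-(1/L))..(1 + 1/L), Real.exp (L * ((1 - σ)/2)) ≤ 2 / L * (Real.exp (1/2) * Real.exp (L/2)) := by
  have hderiv : ∀ x ∈ Set.uIcc (-(1/L)) (1 + 1/L), HasDerivAt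
      (fun σ : ℝ => -(2/L) * Real.exp (L * ((1 - σ)/2))) (Real.exp (L * ((1 - x)/2))) x := by
    intro x _
    have h1 : HasDerivAt (fun σ : ℝ => L * ((1 - σ)/2)) (L * ((-1)/2)) x :=
      (((hasDerivAt_id x).const_sub 1).div_const 2).const_mul L
    refine ((h1.exp).const_mul (-(2/L))).congr_deriv ?_
    field_simp
  rw [intervalIntegral.integral_eq_sub_of_hasDerivAt hderiv
    ((by fun_prop : Continuous (fun σ : ℝ => Real.exp (L * ((1 - σ)/2)))).intervalIntegrable _ _)]
  have : Real.exp (L * ((1 - -(1/L))/2)) = Real.exp (1/2) * Real.exp (L/2) := by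
    rw [← Real.exp_add]; congr 1; field_simp; ring
  rw [this]
  have : 0 ≤ 2 / L * Real.exp (L * ((1 - (1 + 1/L))/2)) := by positivity
  linarith

/-- for admissible `T` and `c = 1 + 1/log T`,
`∫_{1-c}^{c} |(ζ'/ζ)(σ+iT)| |ζ^{(n)}(σ+iT)| dσ ≪ T^{1/2} log^{n+2} T`,
with implied constant depending only on `n` and `δ`. -/
theorem top_contour_bound (n : ℕ) (hn : 1 ≤ n) (δ : ℝ) (hδ : 0 < δ) :
    ∃ K > (0 : ℝ), ∃ T₀ : ℝ, ∀ T ≥ T₀, AdmissibleHeight δ T →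
      ∀ c : ℝ, c = 1 + 1 / Real.log T →
        (∫ σ in (1 - c)..c,
            ‖deriv riemannZeta (↑σ + ↑T * I) / riemannZeta (↑σ + ↑T * I)‖ *
              ‖iteratedDeriv n riemannZeta (↑σ + ↑T * I)‖) ≤
          K * T ^ ((1 : ℝ) / 2) * Real.log T ^ (n + 2) := by
  obtain ⟨K1, hK1, h1⟩ := logderiv_bound δ hδ
  obtain ⟨K2, hK2, h2⟩ := iterderiv_bound n
  refine ⟨K1 * K2 * (2 * Real.exp (1/2)), by positivity, max 100 (Real.exp 10), ?_⟩
  intro T hT hadm c hc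
  have hT1 : 100 ≤ T := (le_max_left _ _).trans hT
  have hTp : 0 < T := by linarith
  have hL : 10 ≤ Real.log T := by
    rw [Real.le_log_iff_exp_le hTp]
    exact (le_max_right _ _).trans hT
  have hLp : 0 < Real.log T := by linarith
  have hr1 : 1 / Real.log T ≤ 1/10 := by gcongr
  have hrp : 0 < 1 / Real.log T := by positivity
  have hTh : T ^ ((1:ℝ)/2) = Real.exp (Real.log T / 2) := by
    rw [Real.rpow_def_of_pos hTp]; congr 1; ring
  rw [hTh]
  set L := Real.log T
  have hc1 : 1 - c = -(1/L) := by rw [hc]; ring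
  rw [hc1, hc]
  have hle : -(1/L) ≤ 1 + 1/L := by linarith
  have key := intervalIntegral.norm_integral_le_of_norm_le (μ := MeasureTheory.volume) (E := ℝ)
    (f := fun σ : ℝ => ‖deriv riemannZeta (↑σ + ↑T * I) / riemannZeta (↑σ + ↑T * I)‖ *
              ‖iteratedDeriv n riemannZeta (↑σ + ↑T * I)‖)
    (g := fun σ : ℝ => (K1 * K2 * L ^ (n+3)) * Real.exp (L * ((1 - σ)/2))) hle
    (Filter.Eventually.of_forall ?_)
    ((by fun_prop : Continuous _).intervalIntegrable _ _)
  · refine (Real.le_norm_self _).trans (key.trans ?_)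
    rw [intervalIntegral.integral_const_mul]
    calc _ ≤ (K1 * K2 * L ^ (n+3)) * (2 / L * (Real.exp (1/2) * Real.exp (L/2))) := by
          gcongr
          exact int_exp_bound L hLp
      _ = _ := by
          rw [pow_succ L (n+2)]
          field_simp
  · intro σ hσ
    have a1 := h1 T hT1 hL hadm σ (by linarith [hσ.1]) (by linarith [hσ.2])
    have a2 := h2 T hT1 hL σ hσ.1.le hσ.2
    rw [norm_mul, norm_norm, norm_norm]
    calc _ ≤ (K1 * L^2) * (K2 * L ^ (n+1) * Real.exp (L * ((1 - σ)/2))) := by gcongr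
      _ = _ := by ring
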